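/- There exists δ₀ ∈ (0,1) such that for every δ ∈ (0,δ₀), every ε with 0 < ε < 1−δ, and every pair of constants 0 < c₁ ≤ c₂, there is C = C(δ,ε,c₁,c₂) > 0, independent of N, M, L, with the following property: for all dyadic numbers N, M, L and every u ∈ 𝒮(ℝ×ℝ²) whose space-time Fourier transform ũ(τ,ξ,η) is supported in { (τ,ξ,η) : N/2 ≤ |(ξ,η)| ≤ 2N, M/2 ≤ |ξ+η| ≤ 2M, L/2 ≤ |τ − ξ³ − η³| ≤ 2L, and c₁|η| ≤ |ξ| ≤ c₂|η| }, one has ‖u‖_{L^{4/(1+δ)}_{t,x,y}(ℝ×ℝ²)} ≤ C (NM)^{ε/4} N^{-(1−δ−ε)/4} L^{(1−δ)/2 − ε/4} ‖u‖_{L²_{t,x,y}}. -/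

import Mathlib

/-!
Put `κ = ε / (1 - δ)`, which lies in `(0, 1)`. The theorem follows by Hölder's inequality
(`lpnorm3_interp`) from the `L⁴` estimate (`lintegral_four_le`)

  `‖u‖₄⁴ ≤ C · L · (L/N)^(1-κ) · (NM)^κ · ‖u‖₂⁴`,

because `4/(1+δ)` lies between `2` and `4`, and raising the constant to the power `(1-δ)/4` produces
exactly the stated powers of `N`, `M` and `L`.

For the `L⁴` estimate, note that `|ξ|, |η| ≥ ρN` on the support of `ũ`, with `ρ` depending on
`c₁, c₂` only (`freq_lower_bound`). Hence `ũ` splits smoothly into four pieces on which the signs of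
`ξ` and `η` are fixed (`exists_signed_part`). For each piece, with frequency support `P`, Plancherel and
Cauchy–Schwarz in the convolution integral bound `‖·‖₄⁴` by `sup_z |P ∩ (z - P)|` times `‖·‖₂⁴`
(`lintegral_fourier_four_le`).

The measure of `P ∩ (z - P)`, `z = (T, X, Y)`, is estimated in `volume_piece_inter_le`. The `τ` variable
contributes `4L`. The remaining `(x, y)` satisfy `|x + y| ≤ 2M`, `|y| ≤ 2N` and
`T - x³ - (X-x)³ - y³ - (Y-y)³ = O(L)`; as `x³ + (X-x)³ = X³/4 + 3X(x - X/2)²` and `|X|, |Y| ∼ N`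
(this is where the fixed signs matter), for given `y` the admissible `x` form a set of length at most
a constant times `min(M, (L/N)/d(y))`, where `d(y)` is the distance from `y` to two fixed points. Bounding the
minimum by a geometric mean leaves `M^κ (L/N)^(1-κ) d(y)^(κ-1)`, whose integral over `|y| ≤ 2N` is
of order `M^κ (L/N)^(1-κ) N^κ` (`volume_resonant_le`).
-/

noncomputable section

open MeasureTheory
open scoped ENNReal

/-- Space-time Fourier transform `ũ(τ,ξ,η)` of a function `u(t,x,y)`. -/
def ftt (w : ℝ → ℝ → ℝ → ℂ) (τ ξ η : ℝ) : ℂ :=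
  ∫ t : ℝ, ∫ x : ℝ, ∫ y : ℝ,
    Complex.exp (-Complex.I * ((t * τ + x * ξ + y * η : ℝ) : ℂ)) * w t x y

/-- L^r norm over all of `ℝ × ℝ²`, for a real exponent `r`. -/
def lpnorm3 (r : ℝ) (w : ℝ → ℝ → ℝ → ℂ) : ℝ≥0∞ :=
  (∫⁻ v : ℝ × ℝ × ℝ, (‖w v.1 v.2.1 v.2.2‖₊ : ℝ≥0∞) ^ r) ^ (1 / r)

/-! ### Sublevel sets and singular integrals in one variable -/

lemma abs_sub_sq_le {r a h : ℝ} (hr : 0 < r) (H : |a ^ 2 - r ^ 2| ≤ h) :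
    |a - r| ≤ h / r ∨ |a + r| ≤ h / r := by
  have e : |a - r| * |a + r| ≤ h := by
    rwa [← abs_mul, show (a - r) * (a + r) = a ^ 2 - r ^ 2 by ring]
  rcases le_total 0 a with ha | ha
  · left
    rw [le_div_iff₀ hr]
    refine le_trans (mul_le_mul_of_nonneg_left ?_ (abs_nonneg _)) e
    rw [abs_of_nonneg (by linarith)]; linarith
  · right
    rw [le_div_iff₀ hr]
    refine le_trans (mul_le_mul_of_nonneg_left ?_ (abs_nonneg _)) (by rwa [mul_comm] at e)
    rw [abs_of_nonpos (by linarith)]; linarith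

lemma setOf_abs_sub_le (c d : ℝ) : {a : ℝ | |a - c| ≤ d} = Set.Icc (c - d) (c + d) := by
  ext a; simp only [Set.mem_ofPred_eq, Set.mem_Icc, abs_le]
  constructor <;> rintro ⟨h1, h2⟩ <;> constructor <;> linarith

lemma volume_abs_sub_le (c d : ℝ) : volume {a : ℝ | |a - c| ≤ d} = ENNReal.ofReal (2 * d) := by
  rw [setOf_abs_sub_le, Real.volume_Icc]; congr 1; ring

/-- A quadratic sublevel set consists of at most two intervals around `±√|q|`, each of length at most
`2h/√|q|`. For `q > 0` the same two intervals still suffice, since `|a² - q| ≤ a² + q`. -/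
lemma volume_quadratic_le (q h : ℝ) (hq : q ≠ 0) (hh : 0 ≤ h) :
    volume {a : ℝ | |q + a ^ 2| ≤ h} ≤ ENNReal.ofReal (4 * h / √|q|) := by
  set r := √|q| with hrdef
  have hr : 0 < r := Real.sqrt_pos.2 (abs_pos.2 hq)
  have hr2 : r ^ 2 = |q| := Real.sq_sqrt (abs_nonneg q)
  have hsub : {a : ℝ | |q + a ^ 2| ≤ h} ⊆
      {a : ℝ | |a - r| ≤ h / r} ∪ {a : ℝ | |a - (-r)| ≤ h / r} := by
    intro a ha
    simp only [Set.mem_ofPred_eq] at ha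
    have : |a ^ 2 - r ^ 2| ≤ h := by
      rw [hr2]
      refine le_trans ?_ ha
      rcases abs_cases q with ⟨h1, h2⟩ | ⟨h1, h2⟩
      · rw [h1, abs_le, abs_of_nonneg (by positivity)]
        constructor <;> nlinarith [sq_nonneg a]
      · rw [h1]; apply le_of_eq; congr 1; ring
    rcases abs_sub_sq_le hr this with h1 | h1
    · left; exact h1
    · right; simpa using h1
  refine (measure_mono hsub).trans ((measure_union_le _ _).trans ?_)
  rw [volume_abs_sub_le, volume_abs_sub_le, ← ENNReal.ofReal_add (by positivity) (by positivity)]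
  apply ENNReal.ofReal_le_ofReal
  apply le_of_eq; ring

lemma lintegral_rpow_centered {κ B : ℝ} (hκ : 0 < κ) (hB : 0 < B) :
    ∫⁻ y in {y : ℝ | |y| ≤ B}, ENNReal.ofReal (|y| ^ (κ - 1)) ≤
      ENNReal.ofReal (2 / κ * B ^ κ) := by
  have hpos : ∫⁻ y in Set.Ioc 0 B, ENNReal.ofReal (|y| ^ (κ - 1)) =
      ENNReal.ofReal (B ^ κ / κ) := by
    have hint : IntervalIntegrable (fun y : ℝ => y ^ (κ - 1)) volume 0 B :=
      intervalIntegral.intervalIntegrable_rpow' (by linarith)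
    have h2 : ∫ y in (0:ℝ)..B, y ^ (κ - 1) = B ^ κ / κ := by
      rw [integral_rpow (Or.inl (by linarith))]
      simp [Real.zero_rpow hκ.ne']
    rw [← h2, intervalIntegral.integral_of_le hB.le,
      ofReal_integral_eq_lintegral_ofReal]
    · refine setLIntegral_congr_fun measurableSet_Ioc fun y hy => ?_
      simp only [abs_of_pos hy.1]
    · exact (intervalIntegrable_iff_integrableOn_Ioc_of_le hB.le).1 hint
    · refine (ae_restrict_iff' measurableSet_Ioc).2 (Filter.Eventually.of_forall fun y hy => ?_)
      exact Real.rpow_nonneg hy.1.le _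
  have hneg : ∫⁻ y in Set.Ico (-B) 0, ENNReal.ofReal (|y| ^ (κ - 1)) =
      ENNReal.ofReal (B ^ κ / κ) := by
    rw [← hpos]
    have := (Measure.measurePreserving_neg (volume : Measure ℝ)).setLIntegral_comp_preimage_emb
      (MeasurableEquiv.neg ℝ).measurableEmbedding
      (fun y => ENNReal.ofReal (|y| ^ (κ - 1))) (Set.Ioc 0 B)
    simp only [abs_neg] at this
    rw [← this]
    congr 2
    ext y; simp only [Set.mem_preimage, Set.mem_Ico, Set.mem_Ioc]
    constructor <;> rintro ⟨h1, h2⟩ <;> constructor <;> linarith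
  have hsub : {y : ℝ | |y| ≤ B} ⊆ (Set.Ico (-B) 0 ∪ Set.Ioc 0 B) ∪ {0} := by
    intro y hy
    simp only [Set.mem_ofPred_eq, abs_le] at hy
    rcases lt_trichotomy y 0 with h | h | h
    · left; left; exact ⟨hy.1, h⟩
    · right; exact h
    · left; right; exact ⟨h, hy.2⟩
  refine (lintegral_mono_set hsub).trans ((lintegral_union_le _ _ _).trans ?_)
  rw [setLIntegral_measure_zero {(0 : ℝ)} _ (by simp), add_zero]
  refine (lintegral_union_le _ _ _).trans ?_
  rw [hpos, hneg, ← ENNReal.ofReal_add (by positivity) (by positivity)]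
  apply ENNReal.ofReal_le_ofReal
  apply le_of_eq; ring

/-- The integral of `|y - r| ^ (κ - 1)` over an interval of radius `B` is bounded uniformly in the
position `r` of the singularity: away from `|y - r| ≤ B` the integrand is at most `B ^ (κ - 1)`. -/
lemma lintegral_rpow_shifted {κ B : ℝ} (r : ℝ) (hκ : 0 < κ) (hκ1 : κ < 1) (hB : 0 < B) :
    ∫⁻ y in {y : ℝ | |y| ≤ B}, ENNReal.ofReal (|y - r| ^ (κ - 1)) ≤
      ENNReal.ofReal ((2 / κ + 2) * B ^ κ) := by
  set F : ℝ → ℝ≥0∞ := fun y => ({y : ℝ | |y| ≤ B}).indicator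
    (fun y => ENNReal.ofReal (|y| ^ (κ - 1))) y with hF
  have hms : MeasurableSet {y : ℝ | |y| ≤ B} := measurableSet_le (by fun_prop) (by fun_prop)
  have hFm : Measurable F := by
    apply Measurable.indicator _ hms
    fun_prop
  have hpt : ∀ y : ℝ, ENNReal.ofReal (|y - r| ^ (κ - 1)) ≤
      F (y - r) + ENNReal.ofReal (B ^ (κ - 1)) := by
    intro y
    by_cases h : |y - r| ≤ B
    · simp [hF, h]
    · refine le_trans (ENNReal.ofReal_le_ofReal ?_) le_add_self
      exact Real.rpow_le_rpow_of_nonpos hB (not_le.1 h).le (by linarith)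
  calc _ ≤ ∫⁻ y in {y : ℝ | |y| ≤ B}, (F (y - r) + ENNReal.ofReal (B ^ (κ - 1))) :=
        lintegral_mono hpt
    _ = (∫⁻ y in {y : ℝ | |y| ≤ B}, F (y - r)) +
          ENNReal.ofReal (B ^ (κ - 1)) * volume {y : ℝ | |y| ≤ B} := by
        rw [lintegral_add_right _ measurable_const, setLIntegral_const]
    _ ≤ (∫⁻ y, F (y - r)) + ENNReal.ofReal (B ^ (κ - 1)) * ENNReal.ofReal (2 * B) := by
        gcongr
        · exact Measure.restrict_le_self
        · have := volume_abs_sub_le 0 B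
          simp only [sub_zero] at this
          exact this.le
    _ ≤ ENNReal.ofReal (2 / κ * B ^ κ) + ENNReal.ofReal (2 * B ^ κ) := by
        gcongr ?_ + ?_
        · rw [lintegral_sub_right_eq_self F r, lintegral_indicator hms]
          exact lintegral_rpow_centered hκ hB
        · rw [← ENNReal.ofReal_mul (by positivity)]
          apply ENNReal.ofReal_le_ofReal
          apply le_of_eq
          rw [Real.rpow_sub_one hB.ne']; field_simp
    _ = _ := by
        rw [← ENNReal.ofReal_add (by positivity) (by positivity)]
        congr 1; ring

/-- `|b² + c|` dominates the squared distance from `b` to a set `{r, -r}`: the real roots of `b² + c`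
if there are any, and `r = 0` otherwise. -/
lemma exists_approx_root (c : ℝ) :
    ∃ r : ℝ, ∀ b : ℝ, (min |b - r| |b + r|) ^ 2 ≤ |b ^ 2 + c| := by
  rcases le_or_gt 0 c with hc | hc
  · refine ⟨0, fun b => ?_⟩
    rw [sub_zero, add_zero, min_self, sq_abs, abs_of_nonneg (by positivity)]
    linarith
  · refine ⟨√(-c), fun b => ?_⟩
    have h : b ^ 2 + c = (b - √(-c)) * (b + √(-c)) := by
      have := Real.sq_sqrt (show (0:ℝ) ≤ -c by linarith)
      linear_combination this
    rw [h, abs_mul, sq]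
    exact mul_le_mul (min_le_left _ _) (min_le_right _ _)
      (le_min (abs_nonneg _) (abs_nonneg _)) (abs_nonneg _)

/-- Geometric mean of two upper bounds, with weights `κ` and `1 - κ`. -/
lemma le_ofReal_interp {V : ℝ≥0∞} {A K d κ : ℝ} (hA : 0 ≤ A) (hK : 0 ≤ K) (hd : 0 < d)
    (hκ : 0 < κ) (hκ1 : κ < 1) (h1 : V ≤ ENNReal.ofReal A) (h2 : V ≤ ENNReal.ofReal (K / d)) :
    V ≤ ENNReal.ofReal (A ^ κ * K ^ (1 - κ) * d ^ (κ - 1)) := by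
  have hx : V ≤ ENNReal.ofReal (min A (K / d)) := by
    rw [ENNReal.ofReal_min]; exact le_min h1 h2
  refine hx.trans (ENNReal.ofReal_le_ofReal ?_)
  have hm : 0 ≤ min A (K / d) := le_min hA (by positivity)
  calc min A (K / d) = (min A (K / d)) ^ κ * (min A (K / d)) ^ (1 - κ) := by
        rw [← Real.rpow_add_of_nonneg hm hκ.le (by linarith)]; simp
    _ ≤ A ^ κ * (K / d) ^ (1 - κ) := by
        have h1 : min A (K / d) ≤ A := min_le_left _ _
        have h2 : min A (K / d) ≤ K / d := min_le_right _ _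
        have h3 : 0 ≤ 1 - κ := by linarith
        gcongr
    _ = _ := by
        rw [Real.div_rpow hK hd.le, show κ - 1 = -(1 - κ) by ring, Real.rpow_neg hd.le]
        ring

/-- The measure of the set of spatial frequencies `(x, y)` for which `(x, y)` and `(X - x, Y - y)` can
interact at output frequency `(T, X, Y)`. As `x³ + (X - x)³ = X³/4 + 3X(x - X/2)²`, for fixed `y` the
first condition confines `x` to a quadratic sublevel set of length `≲ (L/N)/d`, where `d` is the distance
from `y` to two points `Y/2 ± r`, while the second one gives the length `4M`. The geometric mean
of the two bounds is integrable in `y`. -/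
lemma volume_resonant_le {κ ρ N M L T X Y : ℝ} (hκ : 0 < κ) (hκ1 : κ < 1) (hρ : 0 < ρ)
    (hN : 0 < N) (hM : 0 < M) (hL : 0 < L) (hX : ρ * N ≤ |X|) (hX' : |X| ≤ 4 * N)
    (hY : ρ * N ≤ |Y|) :
    volume {p : ℝ × ℝ | |T - p.1 ^ 3 - (X - p.1) ^ 3 - p.2 ^ 3 - (Y - p.2) ^ 3| ≤ 4 * L ∧
      |p.1 + p.2| ≤ 2 * M ∧ |p.2| ≤ 2 * N} ≤
    ENNReal.ofReal ((4 * M) ^ κ * (32 / (3 * ρ * √ρ) * (L / N)) ^ (1 - κ) *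
      (2 * ((2 / κ + 2) * (2 * N) ^ κ))) := by
  set S := {p : ℝ × ℝ | |T - p.1 ^ 3 - (X - p.1) ^ 3 - p.2 ^ 3 - (Y - p.2) ^ 3| ≤ 4 * L ∧
      |p.1 + p.2| ≤ 2 * M ∧ |p.2| ≤ 2 * N} with hS
  have hSm : MeasurableSet S := by
    simp only [hS, Set.ofPred_and]
    refine (measurableSet_le ?_ ?_).inter ((measurableSet_le ?_ ?_).inter
      (measurableSet_le ?_ ?_)) <;> fun_prop
  have hXpos : 0 < |X| := lt_of_lt_of_le (by positivity) hX
  have hYpos : 0 < |Y| := lt_of_lt_of_le (by positivity) hY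
  have hX0 : X ≠ 0 := abs_pos.1 hXpos
  have hY0 : Y ≠ 0 := abs_pos.1 hYpos
  obtain ⟨r, hr⟩ := exists_approx_root (-(T - X ^ 3 / 4 - Y ^ 3 / 4) / (3 * Y))
  set K : ℝ := 32 / (3 * ρ * √ρ) * (L / N) with hKdef
  have hsρ : 0 < √ρ := Real.sqrt_pos.2 hρ
  have hK : 0 < K := by positivity
  set D : ℝ := (4 * M) ^ κ * K ^ (1 - κ) with hD
  have hD0 : 0 ≤ D := by positivity
  have hslice : ∀ y : ℝ, y ≠ Y / 2 + r → y ≠ Y / 2 - r →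
      volume ((fun x => (x, y)) ⁻¹' S) ≤
        ({y : ℝ | |y| ≤ 2 * N}).indicator (fun y => ENNReal.ofReal D *
          (ENNReal.ofReal (|y - (Y / 2 + r)| ^ (κ - 1)) +
            ENNReal.ofReal (|y - (Y / 2 - r)| ^ (κ - 1)))) y := by
    intro y h1 h2
    by_cases hy : |y| ≤ 2 * N
    swap
    · have : (fun x => (x, y)) ⁻¹' S = ∅ := by
        ext x; simp [hS, hy]
      rw [this]; simp
    rw [Set.indicator_of_mem (by exact hy)]
    set b := y - Y / 2 with hb
    have hb1 : 0 < |b - r| := abs_pos.2 (by intro h; apply h1; linarith)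
    have hb2 : 0 < |b + r| := abs_pos.2 (by intro h; apply h2; linarith)
    set d := min |b - r| |b + r| with hd
    have hdpos : 0 < d := lt_min hb1 hb2
    have hv1 : volume ((fun x => (x, y)) ⁻¹' S) ≤ ENNReal.ofReal (4 * M) := by
      refine (measure_mono (t := {x : ℝ | |x - (-y)| ≤ 2 * M}) ?_).trans ?_
      · intro x hx
        have := hx.2.1
        simpa using this
      · rw [volume_abs_sub_le]; apply ENNReal.ofReal_le_ofReal; linarith
    set q := (Y / X) * (b ^ 2 + -(T - X ^ 3 / 4 - Y ^ 3 / 4) / (3 * Y)) with hq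
    have hqlow : ρ / 4 * d ^ 2 ≤ |q| := by
      rw [hq, abs_mul, abs_div]
      refine mul_le_mul ?_ (hr b) (by positivity) (by positivity)
      rw [le_div_iff₀ hXpos]
      calc ρ / 4 * |X| ≤ ρ / 4 * (4 * N) := by gcongr
        _ = ρ * N := by ring
        _ ≤ _ := hY
    have hq0 : q ≠ 0 := abs_pos.1 (lt_of_lt_of_le (by positivity) hqlow)
    have hsq : √ρ / 2 * d ≤ √|q| := by
      apply Real.le_sqrt_of_sq_le
      refine le_trans (le_of_eq ?_) hqlow
      rw [mul_pow, div_pow, Real.sq_sqrt hρ.le]; norm_num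
    have hv2 : volume ((fun x => (x, y)) ⁻¹' S) ≤ ENNReal.ofReal (K / d) := by
      have hsub : (fun x => (x, y)) ⁻¹' S ⊆
          (fun x => x - X / 2) ⁻¹' {a : ℝ | |q + a ^ 2| ≤ 4 * L / (3 * |X|)} := by
        intro x hx
        have h := hx.1
        simp only [Set.mem_preimage, Set.mem_ofPred_eq] at h ⊢
        rw [le_div_iff₀ (by positivity)]
        refine le_trans (le_of_eq ?_) h
        rw [show 3 * |X| = |-(3 * X)| by rw [abs_neg, abs_mul]; norm_num, ← abs_mul]
        congr 1
        rw [hq, hb]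
        field_simp
        ring
      refine (measure_mono hsub).trans ?_
      simp only [sub_eq_add_neg]
      rw [measure_preimage_add_right]
      refine (volume_quadratic_le q _ hq0 (by positivity)).trans (ENNReal.ofReal_le_ofReal ?_)
      calc 4 * (4 * L / (3 * |X|)) / √|q| ≤ 4 * (4 * L / (3 * (ρ * N))) / (√ρ / 2 * d) := by
            gcongr
        _ = K / d := by rw [hKdef]; field_simp; norm_num
    refine (le_ofReal_interp (by positivity) hK.le hdpos hκ hκ1 hv1 hv2).trans ?_
    rw [ENNReal.ofReal_mul hD0]
    gcongr
    rw [show y - (Y / 2 + r) = b - r by rw [hb]; ring,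
      show y - (Y / 2 - r) = b + r by rw [hb]; ring]
    rcases min_choice |b - r| |b + r| with h | h
    · rw [hd, h]; exact le_self_add
    · rw [hd, h]; exact le_add_self
  have hms : MeasurableSet {y : ℝ | |y| ≤ 2 * N} := measurableSet_le (by fun_prop) (by fun_prop)
  have hae : ∀ c : ℝ, ∀ᵐ y : ℝ, y ≠ c := fun c => by
    rw [ae_iff]; simp
  rw [Measure.volume_eq_prod, Measure.prod_apply_symm hSm]
  calc _ ≤ ∫⁻ y, ({y : ℝ | |y| ≤ 2 * N}).indicator (fun y => ENNReal.ofReal D *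
          (ENNReal.ofReal (|y - (Y / 2 + r)| ^ (κ - 1)) +
            ENNReal.ofReal (|y - (Y / 2 - r)| ^ (κ - 1)))) y := by
        apply lintegral_mono_ae
        filter_upwards [hae (Y / 2 + r), hae (Y / 2 - r)] with y h1 h2 using hslice y h1 h2
    _ = ENNReal.ofReal D * ((∫⁻ y in {y : ℝ | |y| ≤ 2 * N},
          ENNReal.ofReal (|y - (Y / 2 + r)| ^ (κ - 1))) +
          ∫⁻ y in {y : ℝ | |y| ≤ 2 * N}, ENNReal.ofReal (|y - (Y / 2 - r)| ^ (κ - 1))) := by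
        rw [lintegral_indicator hms, lintegral_const_mul _ (by fun_prop),
          lintegral_add_left (by fun_prop)]
    _ ≤ ENNReal.ofReal D * (ENNReal.ofReal ((2 / κ + 2) * (2 * N) ^ κ) +
          ENNReal.ofReal ((2 / κ + 2) * (2 * N) ^ κ)) := by
        gcongr <;> exact lintegral_rpow_shifted _ hκ hκ1 (by positivity)
    _ = _ := by
        rw [← ENNReal.ofReal_add (by positivity) (by positivity), ← ENNReal.ofReal_mul hD0]
        congr 1; ring

/-! ### Resonant sets of a frequency piece -/

/-- The part of the frequency region on which `ξ` has the sign of `s₁` and `η` the sign of `s₂`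
(with `s₁, s₂ = ±1`). Points are triples `(τ, ξ, η)`. The lower bounds `|ξ|, |η| ≥ ρN` replace the
comparability of `|ξ|` and `|η|`. -/
def piece (ρ N M L s₁ s₂ : ℝ) : Set (ℝ × ℝ × ℝ) :=
  {p | |p.1 - p.2.1 ^ 3 - p.2.2 ^ 3| ≤ 2 * L ∧ |p.2.1 + p.2.2| ≤ 2 * M ∧
    ρ * N ≤ s₁ * p.2.1 ∧ s₁ * p.2.1 ≤ 2 * N ∧ ρ * N ≤ s₂ * p.2.2 ∧ s₂ * p.2.2 ≤ 2 * N}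

/-- The factor, depending on `κ` and `ρ` only, in the bound of `volume_piece_inter_le`. -/
def resConst (κ ρ : ℝ) : ℝ :=
  4 * (8 ^ κ * (32 / (3 * ρ * √ρ)) ^ (1 - κ) * (2 * (2 / κ + 2)))

lemma abs_bounds_of_sign {s x y a b : ℝ} (hs : |s| = 1) (ha : 0 ≤ a) (hx : a ≤ s * x)
    (hx' : s * x ≤ b) (hy : a ≤ s * y) (hy' : s * y ≤ b) :
    a ≤ |x + y| ∧ |x + y| ≤ 2 * b ∧ |x| ≤ b := by
  have key : ∀ w : ℝ, 0 ≤ s * w → |w| = s * w := fun w hw => by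
    rw [← abs_of_nonneg hw, abs_mul, hs, one_mul]
  rw [key (x + y) (by rw [mul_add]; linarith), key x (by linarith), mul_add]
  exact ⟨by linarith, by linarith, hx'⟩

/-- The measure of `P ∩ (z - P)` for a frequency piece `P`, uniformly in `z`. The modulation condition
gives a factor `4L` from the `τ` variable; since signs are fixed on `P`, the components of `z` satisfy
`|X|, |Y| ≥ ρN` as soon as the set is nonempty, and `volume_resonant_le` applies. -/
lemma volume_piece_inter_le {κ ρ N M L s₁ s₂ : ℝ} (hκ : 0 < κ) (hκ1 : κ < 1) (hρ : 0 < ρ)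
    (hN : 0 < N) (hM : 0 < M) (hL : 0 < L) (h₁ : |s₁| = 1) (h₂ : |s₂| = 1) (z : ℝ × ℝ × ℝ) :
    volume {v | v ∈ piece ρ N M L s₁ s₂ ∧ z - v ∈ piece ρ N M L s₁ s₂} ≤
      ENNReal.ofReal (resConst κ ρ * (L * (L / N) ^ (1 - κ) * (N * M) ^ κ)) := by
  obtain ⟨T, X, Y⟩ := z
  by_cases hne : {v | v ∈ piece ρ N M L s₁ s₂ ∧ (T, X, Y) - v ∈ piece ρ N M L s₁ s₂} = ∅
  · rw [hne]; simp
  obtain ⟨⟨t, x, y⟩, ⟨-, -, hx1, hx2, hy1, hy2⟩, -, -, hx3, hx4, hy3, hy4⟩ :=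
    Set.nonempty_iff_ne_empty.2 hne
  simp only [Prod.mk_sub_mk] at hx1 hx2 hy1 hy2 hx3 hx4 hy3 hy4
  have hρN : 0 ≤ ρ * N := by positivity
  have hXb := abs_bounds_of_sign h₁ hρN hx1 hx2 hx3 hx4
  have hYb := abs_bounds_of_sign h₂ hρN hy1 hy2 hy3 hy4
  rw [add_sub_cancel] at hXb hYb
  set S := {p : ℝ × ℝ | |T - p.1 ^ 3 - (X - p.1) ^ 3 - p.2 ^ 3 - (Y - p.2) ^ 3| ≤ 4 * L ∧
      |p.1 + p.2| ≤ 2 * M ∧ |p.2| ≤ 2 * N} with hS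
  have hSm : MeasurableSet S := by
    simp only [hS, Set.ofPred_and]
    refine (measurableSet_le ?_ ?_).inter ((measurableSet_le ?_ ?_).inter
      (measurableSet_le ?_ ?_)) <;> fun_prop
  set Q : Set (ℝ × ℝ × ℝ) := {v | v.2 ∈ S ∧ |v.1 - (v.2.1 ^ 3 + v.2.2 ^ 3)| ≤ 2 * L} with hQ
  have hQm : MeasurableSet Q := by
    simp only [hQ, Set.ofPred_and]
    refine (measurable_snd hSm).inter (measurableSet_le ?_ ?_) <;> fun_prop
  have hsub : {v | v ∈ piece ρ N M L s₁ s₂ ∧ (T, X, Y) - v ∈ piece ρ N M L s₁ s₂} ⊆ Q := by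
    rintro ⟨t, x, y⟩ ⟨⟨a1, a2, -, -, a5, a6⟩, ⟨b1, b2, -, -, b5, b6⟩⟩
    simp only [Prod.mk_sub_mk] at a1 a2 a5 a6 b1 b2 b5 b6
    refine ⟨⟨?_, a2, (abs_bounds_of_sign h₂ hρN a5 a6 b5 b6).2.2⟩, ?_⟩
    · show |T - x ^ 3 - (X - x) ^ 3 - y ^ 3 - (Y - y) ^ 3| ≤ 4 * L
      rw [abs_le] at a1 b1 ⊢
      constructor <;> linarith [a1.1, a1.2, b1.1, b1.2]
    · show |t - (x ^ 3 + y ^ 3)| ≤ 2 * L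
      rwa [← sub_sub]
  refine (measure_mono hsub).trans ?_
  rw [Measure.volume_eq_prod, Measure.prod_apply_symm hQm]
  calc _ ≤ ∫⁻ p : ℝ × ℝ, S.indicator (fun _ => ENNReal.ofReal (4 * L)) p := by
        refine lintegral_mono fun p => ?_
        by_cases hp : p ∈ S
        · rw [Set.indicator_of_mem hp]
          refine (measure_mono (t := {t : ℝ | |t - (p.1 ^ 3 + p.2 ^ 3)| ≤ 2 * L}) ?_).trans ?_
          · intro t ht; exact ht.2
          · rw [volume_abs_sub_le]; apply ENNReal.ofReal_le_ofReal; linarith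
        · have : (fun t => (t, p)) ⁻¹' Q = ∅ := by
            ext t; simp [hQ, hp]
          rw [this]; simp
    _ = ENNReal.ofReal (4 * L) * volume S := by
        rw [lintegral_indicator hSm, setLIntegral_const]
    _ ≤ ENNReal.ofReal (4 * L) * ENNReal.ofReal ((4 * M) ^ κ *
          (32 / (3 * ρ * √ρ) * (L / N)) ^ (1 - κ) * (2 * ((2 / κ + 2) * (2 * N) ^ κ))) := by
        gcongr
        exact volume_resonant_le hκ hκ1 hρ hN hM hL hXb.1 (by linarith [hXb.2.1]) hYb.1
    _ = _ := by
        rw [← ENNReal.ofReal_mul (by positivity)]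
        congr 1
        have hs : 0 < √ρ := Real.sqrt_pos.2 hρ
        rw [resConst, Real.mul_rpow (by positivity) (by positivity),
          Real.mul_rpow (by positivity) (by positivity),
          Real.mul_rpow (by positivity) (by positivity),
          Real.mul_rpow (by positivity) (by positivity),
          show (8 : ℝ) = 4 * 2 by norm_num, Real.mul_rpow (by positivity) (by positivity)]
        ring

/-! ### The bilinear L⁴ estimate -/

open scoped FourierTransform SchwartzMap

section Fourier

variable {V : Type*} [NormedAddCommGroup V] [InnerProductSpace ℝ V] [FiniteDimensional ℝ V]
  [MeasurableSpace V] [BorelSpace V]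

lemma lintegral_sq_eq_ofReal (f : 𝓢(V, ℂ)) :
    ∫⁻ x, ‖f x‖ₑ ^ 2 = ENNReal.ofReal (∫ x, ‖f x‖ ^ 2) := by
  rw [ofReal_integral_eq_lintegral_ofReal]
  · refine lintegral_congr fun x => ?_
    rw [ENNReal.ofReal_pow (norm_nonneg _), ofReal_norm]
  · exact (f.memLp 2).integrable_norm_pow (by norm_num)
  · exact Filter.Eventually.of_forall fun x => by positivity

lemma lintegral_sq_fourier (f : 𝓢(V, ℂ)) :
    ∫⁻ x, ‖(𝓕 f) x‖ₑ ^ 2 = ∫⁻ x, ‖f x‖ₑ ^ 2 := by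
  rw [lintegral_sq_eq_ofReal, lintegral_sq_eq_ofReal, SchwartzMap.integral_norm_sq_fourier]

/-- Cauchy–Schwarz against the indicator function of the support. -/
lemma sq_lintegral_le_support {α : Type*} [MeasurableSpace α] (μ : Measure α) (F : α → ℝ≥0∞)
    (hF : Measurable F) :
    (∫⁻ x, F x ∂μ) ^ 2 ≤ μ (Function.support F) * ∫⁻ x, F x ^ 2 ∂μ := by
  have hs : MeasurableSet (Function.support F) := measurableSet_support hF
  have h := ENNReal.lintegral_mul_le_Lp_mul_Lq μ (p := 2) (q := 2) (by constructor <;> norm_num)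
    (f := (Function.support F).indicator (fun _ => 1)) (g := F)
    ((measurable_const.indicator hs).aemeasurable) hF.aemeasurable
  have h1 : ∫⁻ a, ((Function.support F).indicator (fun _ => (1 : ℝ≥0∞)) * F) a ∂μ =
      ∫⁻ x, F x ∂μ := by
    refine lintegral_congr fun x => ?_
    by_cases hx : F x = 0 <;> simp [hx, Set.indicator]
  have h2 : ∫⁻ a, (Function.support F).indicator (fun _ => (1 : ℝ≥0∞)) a ^ (2:ℝ) ∂μ =
      μ (Function.support F) := by
    rw [← lintegral_indicator_one hs]
    refine lintegral_congr fun x => ?_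
    by_cases hx : F x = 0 <;> simp [hx, Set.indicator]
  rw [h1, h2] at h
  calc (∫⁻ x, F x ∂μ) ^ 2 ≤ (μ (Function.support F) ^ (1 / (2:ℝ)) *
        (∫⁻ x, F x ^ (2:ℝ) ∂μ) ^ (1 / (2:ℝ))) ^ 2 := by gcongr
    _ = _ := by
      rw [mul_pow, ← ENNReal.rpow_natCast, ← ENNReal.rpow_natCast, ← ENNReal.rpow_mul,
        ← ENNReal.rpow_mul]
      norm_num

/-- If the support `S` of `f` satisfies `|S ∩ (z - S)| ≤ K` for all `z`, then
`‖𝓕 f‖₄⁴ = ‖f * f‖₂² ≤ K ‖f‖₂⁴`, by Plancherel and Cauchy–Schwarz in the convolution integral. -/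
lemma lintegral_fourier_four_le (f : 𝓢(V, ℂ)) (K : ℝ≥0∞)
    (hK : ∀ z : V, volume {w : V | f w ≠ 0 ∧ f (z - w) ≠ 0} ≤ K) :
    ∫⁻ x, ‖(𝓕 f) x‖ₑ ^ 4 ≤ K * (∫⁻ x, ‖f x‖ₑ ^ 2) ^ 2 := by
  set h : 𝓢(V, ℂ) := SchwartzMap.convolution (ContinuousLinearMap.mul ℂ ℂ) f f with hh
  have hF : ∀ x, (𝓕 h) x = (𝓕 f) x * (𝓕 f) x := fun x => by
    rw [hh, SchwartzMap.fourier_convolution_apply, SchwartzMap.fourier_coe,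
      Real.fourier_bilin_convolution_eq _ f.integrable f.integrable]
    simp
  have hfm : Measurable fun w => ‖f w‖ₑ := f.continuous.enorm.measurable
  have hm2 : Measurable (Function.uncurry fun (z w : V) => (‖f w‖ₑ * ‖f (z - w)‖ₑ) ^ 2) := by
    have h1 : Continuous fun p : V × V => ‖f p.2‖ₑ := (f.continuous.comp continuous_snd).enorm
    have h2 : Continuous fun p : V × V => ‖f (p.1 - p.2)‖ₑ :=
      (f.continuous.comp (continuous_fst.sub continuous_snd)).enorm
    exact (h1.measurable.mul h2.measurable).pow_const 2
  have hpt : ∀ z, ‖h z‖ₑ ^ 2 ≤ K * ∫⁻ w, (‖f w‖ₑ * ‖f (z - w)‖ₑ) ^ 2 := by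
    intro z
    have h1 : ‖h z‖ₑ ≤ ∫⁻ w, ‖f w‖ₑ * ‖f (z - w)‖ₑ := by
      rw [hh, SchwartzMap.convolution_apply, convolution]
      refine (enorm_integral_le_lintegral_enorm _).trans (le_of_eq ?_)
      refine lintegral_congr fun w => ?_
      simp [enorm_mul]
    have hmeas : Measurable fun w => ‖f w‖ₑ * ‖f (z - w)‖ₑ := by
      have h2 : Continuous fun w : V => ‖f (z - w)‖ₑ :=
        (f.continuous.comp (continuous_const.sub continuous_id)).enorm
      exact hfm.mul h2.measurable
    calc ‖h z‖ₑ ^ 2 ≤ (∫⁻ w, ‖f w‖ₑ * ‖f (z - w)‖ₑ) ^ 2 := by gcongr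
      _ ≤ _ := sq_lintegral_le_support volume _ hmeas
      _ ≤ _ := by
        gcongr
        refine (measure_mono ?_).trans (hK z)
        intro w hw
        simpa [Function.mem_support, not_or] using hw
  calc ∫⁻ x, ‖(𝓕 f) x‖ₑ ^ 4 = ∫⁻ x, ‖(𝓕 h) x‖ₑ ^ 2 := by
        refine lintegral_congr fun x => ?_
        rw [hF, enorm_mul]; ring
    _ = ∫⁻ z, ‖h z‖ₑ ^ 2 := lintegral_sq_fourier h
    _ ≤ ∫⁻ z, K * ∫⁻ w, (‖f w‖ₑ * ‖f (z - w)‖ₑ) ^ 2 := lintegral_mono hpt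
    _ = K * ∫⁻ z, ∫⁻ w, (‖f w‖ₑ * ‖f (z - w)‖ₑ) ^ 2 :=
        lintegral_const_mul _ hm2.lintegral_prod_right'
    _ = K * ∫⁻ w, ∫⁻ z, (‖f w‖ₑ * ‖f (z - w)‖ₑ) ^ 2 := by
        rw [lintegral_lintegral_swap hm2.aemeasurable]
    _ = K * ∫⁻ w, ‖f w‖ₑ ^ 2 * ∫⁻ z, ‖f z‖ₑ ^ 2 := by
        congr 1
        refine lintegral_congr fun w => ?_
        simp_rw [mul_pow]
        rw [lintegral_sub_right_eq_self (fun z => ‖f w‖ₑ ^ 2 * ‖f z‖ₑ ^ 2) w,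
          lintegral_const_mul _ (hfm.pow_const 2)]
    _ = _ := by
        rw [lintegral_mul_const _ (hfm.pow_const 2), sq]

end Fourier

/-- A sharp cutoff to `{ℓ₁ > 0, ℓ₂ > 0}` preserves smoothness when `f` vanishes wherever `|ℓ₁| < a`
or `|ℓ₂| < a`. -/
lemma exists_signed_part {V : Type*} [NormedAddCommGroup V] [NormedSpace ℝ V]
    (f : 𝓢(V, ℂ)) (hc : HasCompactSupport f) (ℓ₁ ℓ₂ : V → ℝ)
    (h₁ : Continuous ℓ₁) (h₂ : Continuous ℓ₂) (a : ℝ) (ha : 0 < a)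
    (h : ∀ w, f w ≠ 0 → a ≤ |ℓ₁ w| ∧ a ≤ |ℓ₂ w|) :
    ∃ g : 𝓢(V, ℂ), ∀ w, g w = if 0 < ℓ₁ w ∧ 0 < ℓ₂ w then f w else 0 := by
  classical
  set G : V → ℂ := fun w => if 0 < ℓ₁ w ∧ 0 < ℓ₂ w then f w else 0 with hG
  have hGc : HasCompactSupport G := by
    refine hc.mono fun w hw => ?_
    intro h0
    apply hw
    simp only [hG]
    split_ifs
    · exact h0
    · rfl
  have hzero : ∀ ℓ : V → ℝ, Continuous ℓ → (∀ w, G w ≠ 0 → a ≤ |ℓ w| ∧ 0 < ℓ w) →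
      ∀ w, ℓ w ≤ 0 → ContDiffAt ℝ ((⊤ : ℕ∞) : WithTop ℕ∞) G w := by
    intro ℓ hℓ hG0 w hw
    have hev : ∀ᶠ w' in nhds w, ℓ w' < a :=
      hℓ.continuousAt.eventually_lt continuousAt_const (lt_of_le_of_lt hw ha)
    refine (contDiffAt_const (c := (0:ℂ))).congr_of_eventuallyEq ?_
    filter_upwards [hev] with w' hw'
    by_contra hne
    obtain ⟨b1, b2⟩ := hG0 w' hne
    rw [abs_of_pos b2] at b1
    linarith
  have hGne : ∀ w, G w ≠ 0 → f w ≠ 0 ∧ 0 < ℓ₁ w ∧ 0 < ℓ₂ w := by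
    intro w hw
    simp only [hG] at hw
    split_ifs at hw with hif
    · exact ⟨hw, hif⟩
    · exact absurd rfl hw
  have hGs : ContDiff ℝ ((⊤ : ℕ∞) : WithTop ℕ∞) G := by
    rw [contDiff_iff_contDiffAt]
    intro w
    by_cases hw1 : 0 < ℓ₁ w
    · by_cases hw2 : 0 < ℓ₂ w
      · refine (f.smooth ⊤).contDiffAt.congr_of_eventuallyEq ?_
        have e1 : ∀ᶠ w' in nhds w, 0 < ℓ₁ w' := continuousAt_const.eventually_lt h₁.continuousAt hw1
        have e2 : ∀ᶠ w' in nhds w, 0 < ℓ₂ w' := continuousAt_const.eventually_lt h₂.continuousAt hw2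
        filter_upwards [e1, e2] with w' b1 b2
        simp [hG, b1, b2]
      · exact hzero ℓ₂ h₂ (fun w hw => ⟨(h w (hGne w hw).1).2, (hGne w hw).2.2⟩) w (not_lt.1 hw2)
    · exact hzero ℓ₁ h₁ (fun w hw => ⟨(h w (hGne w hw).1).1, (hGne w hw).2.1⟩) w (not_lt.1 hw1)
  exact ⟨hGc.toSchwartzMap hGs, fun w => rfl⟩

/-! ### Transfer to Euclidean space -/

/-- `ℝ × ℝ × ℝ` with the Euclidean inner product. The product type carries the sup norm, whereas the
Fourier transform and the Plancherel theorem need an inner product space. -/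
abbrev E3 : Type := WithLp 2 (ℝ × WithLp 2 (ℝ × ℝ))

/-- The coordinates of a point of `E3`. -/
def coordE3 : E3 ≃L[ℝ] ℝ × ℝ × ℝ :=
  (WithLp.prodContinuousLinearEquiv 2 ℝ ℝ (WithLp 2 (ℝ × ℝ))).trans
    ((ContinuousLinearEquiv.refl ℝ ℝ).prodCongr (WithLp.prodContinuousLinearEquiv 2 ℝ ℝ ℝ))

lemma measurePreserving_coordE3 : MeasurePreserving coordE3 := by
  have h1 : MeasurePreserving (WithLp.ofLp : E3 → ℝ × WithLp 2 (ℝ × ℝ)) :=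
    WithLp.volume_preserving_ofLp ℝ (WithLp 2 (ℝ × ℝ))
  have h2 : MeasurePreserving (WithLp.ofLp : WithLp 2 (ℝ × ℝ) → ℝ × ℝ) :=
    WithLp.volume_preserving_ofLp ℝ ℝ
  exact ((MeasurePreserving.id (volume : Measure ℝ)).prod h2).comp h1

lemma inner_E3 (v w : E3) : inner ℝ v w = (coordE3 v).1 * (coordE3 w).1 +
    (coordE3 v).2.1 * (coordE3 w).2.1 + (coordE3 v).2.2 * (coordE3 w).2.2 := by
  rw [WithLp.prod_inner_apply, WithLp.prod_inner_apply]
  simp [coordE3]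
  ring

/-- The frequency `(τ, ξ, η)` corresponding to `w`. The kernel of `𝓕⁻` is `exp (2πi⟨v, w⟩)` and
that of `ftt` is `exp (-i(tτ + xξ + yη))`, whence the factor `-2π`. -/
def freqMap (w : E3) : ℝ × ℝ × ℝ := (-(2 * Real.pi)) • coordE3 w

lemma freqMap_sub (z w : E3) : freqMap (z - w) = freqMap z - freqMap w := by
  simp only [freqMap, map_sub, smul_sub]

lemma continuous_freqMap : Continuous freqMap := by
  unfold freqMap; fun_prop

instance isAddHaarMeasure_volume_R3 : (volume : Measure (ℝ × ℝ × ℝ)).IsAddHaarMeasure := by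
  have : (volume : Measure (ℝ × ℝ)).IsAddHaarMeasure :=
    inferInstanceAs ((volume : Measure ℝ).prod (volume : Measure ℝ)).IsAddHaarMeasure
  exact inferInstanceAs
    ((volume : Measure ℝ).prod (volume : Measure (ℝ × ℝ))).IsAddHaarMeasure

lemma volume_freqMap_preimage_le (T : Set (ℝ × ℝ × ℝ)) :
    volume (freqMap ⁻¹' T) ≤ volume T := by
  have h : freqMap ⁻¹' T = coordE3 ⁻¹' ((fun v => (-(2 * Real.pi)) • v) ⁻¹' T) := rfl
  rw [h, measurePreserving_coordE3.measure_preimage_emb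
    coordE3.toHomeomorph.measurableEmbedding]
  rw [Measure.addHaar_preimage_smul _ (by simp [Real.pi_ne_zero])]
  refine mul_le_of_le_one_left zero_le ?_
  rw [ENNReal.ofReal_le_one, abs_inv, abs_pow, abs_neg, abs_of_pos (by positivity)]
  apply inv_le_one_of_one_le₀
  apply one_le_pow₀
  linarith [Real.pi_gt_three]

/-- The iterated integral defining `ftt` is an integral over the product space. -/
lemma ftt_eq (u : 𝓢(ℝ × ℝ × ℝ, ℂ)) (τ ξ η : ℝ) :
    ftt (fun t x y => u (t, x, y)) τ ξ η =
      ∫ v : ℝ × ℝ × ℝ, Complex.exp (-Complex.I * ((v.1 * τ + v.2.1 * ξ + v.2.2 * η : ℝ) : ℂ)) *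
        u v := by
  have hint : Integrable (fun v : ℝ × ℝ × ℝ =>
      Complex.exp (-Complex.I * ((v.1 * τ + v.2.1 * ξ + v.2.2 * η : ℝ) : ℂ)) * u v)
      ((volume : Measure ℝ).prod (volume : Measure (ℝ × ℝ))) := by
    rw [← Measure.volume_eq_prod]
    refine (u.integrable (μ := volume)).mono ?_ ?_
    · apply Continuous.aestronglyMeasurable
      have := u.continuous
      fun_prop
    · refine Filter.Eventually.of_forall fun v => ?_
      rw [norm_mul, Complex.norm_exp]
      simp
  rw [Measure.volume_eq_prod, integral_prod _ hint, ftt]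
  refine integral_congr_ae ?_
  filter_upwards [hint.prod_right_ae] with t ht
  rw [Measure.volume_eq_prod] at ht
  rw [Measure.volume_eq_prod, integral_prod _ ht]

/-- A Schwartz function on `ℝ × ℝ × ℝ`, regarded as one on `E3`. -/
def toE3 (u : 𝓢(ℝ × ℝ × ℝ, ℂ)) : 𝓢(E3, ℂ) :=
  SchwartzMap.compCLMOfContinuousLinearEquiv ℂ coordE3 u

lemma toE3_apply (u : 𝓢(ℝ × ℝ × ℝ, ℂ)) (v : E3) : toE3 u v = u (coordE3 v) := rfl

lemma fourierInv_toE3 (u : 𝓢(ℝ × ℝ × ℝ, ℂ)) (w : E3) :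
    (𝓕⁻ (toE3 u)) w = ftt (fun t x y => u (t, x, y)) (freqMap w).1 (freqMap w).2.1
      (freqMap w).2.2 := by
  rw [ftt_eq, ← measurePreserving_coordE3.integral_comp
    coordE3.toHomeomorph.measurableEmbedding, SchwartzMap.fourierInv_coe, Real.fourierInv_eq']
  refine integral_congr_ae (Filter.Eventually.of_forall fun v => ?_)
  simp only [toE3_apply, smul_eq_mul, inner_E3, freqMap, Prod.smul_fst, Prod.smul_snd]
  congr 2
  push_cast
  ring

lemma lintegral_toE3 (u : 𝓢(ℝ × ℝ × ℝ, ℂ)) (k : ℕ) :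
    ∫⁻ v, ‖toE3 u v‖ₑ ^ k = ∫⁻ v, ‖u v‖ₑ ^ k :=
  measurePreserving_coordE3.lintegral_comp_emb coordE3.toHomeomorph.measurableEmbedding
    (fun v => ‖u v‖ₑ ^ k)

/-! ### The L⁴ estimate and interpolation -/

lemma sum_pow_four_le {ι : Type*} [Fintype ι] [Nonempty ι] (a : ι → ℝ≥0∞) :
    (∑ i, a i) ^ 4 ≤ (Fintype.card ι : ℝ≥0∞) ^ 4 * ∑ i, a i ^ 4 := by
  obtain ⟨j, hj⟩ := Finite.exists_max a
  calc (∑ i, a i) ^ 4 ≤ (∑ _i : ι, a j) ^ 4 := by gcongr with i _; exact hj i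
    _ = (Fintype.card ι : ℝ≥0∞) ^ 4 * a j ^ 4 := by
        rw [Finset.sum_const, nsmul_eq_mul, mul_pow]; rfl
    _ ≤ _ := by
        gcongr
        exact Finset.single_le_sum (f := fun i => a i ^ 4) (fun i _ => zero_le) (Finset.mem_univ j)

/-- The sign encoded by a Boolean: `1` for `true` and `-1` for `false`. -/
def sgn (b : Bool) : ℝ := if b then 1 else -1

lemma abs_sgn (b : Bool) : |sgn b| = 1 := by cases b <;> simp [sgn]

lemma sgn_mul_of_pos {b : Bool} {x : ℝ} (h : 0 < sgn b * x) : sgn b * x = |x| := by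
  rw [← abs_of_pos h, abs_mul, abs_sgn, one_mul]

/-- The `L⁴` estimate. The Fourier transform is split into four Schwartz pieces according to the signs
of `ξ` and `η`; `lintegral_fourier_four_le` and `volume_piece_inter_le` apply to each of them, and
`1024 = 4⁴ · 4` accounts for adding them up. -/
lemma lintegral_four_le {κ ρ N M L : ℝ} (hκ : 0 < κ) (hκ1 : κ < 1) (hρ : 0 < ρ)
    (hN : 0 < N) (hM : 0 < M) (hL : 0 < L) (u : 𝓢(ℝ × ℝ × ℝ, ℂ))
    (hu : ∀ τ ξ η : ℝ, ftt (fun t x y => u (t, x, y)) τ ξ η ≠ 0 →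
      |τ - ξ ^ 3 - η ^ 3| ≤ 2 * L ∧ |ξ + η| ≤ 2 * M ∧
        ρ * N ≤ |ξ| ∧ |ξ| ≤ 2 * N ∧ ρ * N ≤ |η| ∧ |η| ≤ 2 * N) :
    ∫⁻ v, ‖u v‖ₑ ^ 4 ≤
      ENNReal.ofReal (1024 * (resConst κ ρ * (L * (L / N) ^ (1 - κ) * (N * M) ^ κ))) *
        (∫⁻ v, ‖u v‖ₑ ^ 2) ^ 2 := by
  set f : 𝓢(E3, ℂ) := 𝓕⁻ (toE3 u) with hf
  have hUf : 𝓕 f = toE3 u := by rw [hf, FourierTransform.fourier_fourierInv_eq]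
  have hfs : ∀ w, f w ≠ 0 → |(freqMap w).1 - (freqMap w).2.1 ^ 3 - (freqMap w).2.2 ^ 3| ≤ 2 * L ∧
      |(freqMap w).2.1 + (freqMap w).2.2| ≤ 2 * M ∧
      ρ * N ≤ |(freqMap w).2.1| ∧ |(freqMap w).2.1| ≤ 2 * N ∧
      ρ * N ≤ |(freqMap w).2.2| ∧ |(freqMap w).2.2| ≤ 2 * N := fun w hw => by
    rw [hf, fourierInv_toE3] at hw
    exact hu _ _ _ hw
  have hρN : 0 < ρ * N := by positivity
  -- the support conditions bound all three frequency coordinates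
  have hcomp : HasCompactSupport f := by
    set R : ℝ := 2 * L + 2 * (2 * N) ^ 3 + 2 * N with hR
    have hKc : IsCompact ((fun v : ℝ × ℝ × ℝ => coordE3.symm ((-(2 * Real.pi))⁻¹ • v)) ''
        Metric.closedBall 0 R) :=
      (isCompact_closedBall _ _).image (by fun_prop)
    refine HasCompactSupport.of_support_subset_isCompact hKc fun w hw => ?_
    refine ⟨freqMap w, ?_, ?_⟩
    · obtain ⟨h1, -, -, h2, -, h3⟩ := hfs w hw
      have c1 : |(freqMap w).2.1 ^ 3| ≤ (2 * N) ^ 3 := by rw [abs_pow]; gcongr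
      have c2 : |(freqMap w).2.2 ^ 3| ≤ (2 * N) ^ 3 := by rw [abs_pow]; gcongr
      have hp : 0 < (2 * N) ^ 3 := by positivity
      rw [mem_closedBall_zero_iff, Prod.norm_def, Prod.norm_def, max_le_iff, max_le_iff]
      simp only [Real.norm_eq_abs]
      refine ⟨?_, by rw [hR]; linarith, by rw [hR]; linarith⟩
      rw [abs_le] at h1 c1 c2 ⊢
      constructor <;> rw [hR] <;> linarith [h1.1, h1.2, c1.1, c1.2, c2.1, c2.2]
    · show coordE3.symm ((-(2 * Real.pi))⁻¹ • ((-(2 * Real.pi)) • coordE3 w)) = w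
      rw [inv_smul_smul₀ (by simp [Real.pi_ne_zero]), ContinuousLinearEquiv.symm_apply_apply]
  have hex : ∀ i : Bool × Bool, ∃ g : 𝓢(E3, ℂ), ∀ w, g w =
      if 0 < sgn i.1 * (freqMap w).2.1 ∧ 0 < sgn i.2 * (freqMap w).2.2 then f w else 0 := by
    intro i
    have hcont := continuous_freqMap
    refine exists_signed_part f hcomp (fun w => sgn i.1 * (freqMap w).2.1)
      (fun w => sgn i.2 * (freqMap w).2.2) (by fun_prop) (by fun_prop) (ρ * N) hρN ?_
    intro w hw
    rw [abs_mul, abs_mul, abs_sgn, abs_sgn, one_mul, one_mul]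
    exact ⟨(hfs w hw).2.2.1, (hfs w hw).2.2.2.2.1⟩
  choose g hg using hex
  have hgne : ∀ i w, g i w ≠ 0 →
      f w ≠ 0 ∧ 0 < sgn i.1 * (freqMap w).2.1 ∧ 0 < sgn i.2 * (freqMap w).2.2 := by
    intro i w hw
    rw [hg] at hw
    split_ifs at hw with h
    · exact ⟨hw, h⟩
    · exact absurd rfl hw
  have hsum : f = ∑ i, g i := by
    ext w
    rw [sum_apply]
    by_cases hw : f w = 0
    · rw [hw, Finset.sum_eq_zero]
      intro i _
      by_contra h
      exact (hgne i w h).1 hw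
    · have hx : (freqMap w).2.1 ≠ 0 := abs_pos.1 (hρN.trans_le (hfs w hw).2.2.1)
      have hy : (freqMap w).2.2 ≠ 0 := abs_pos.1 (hρN.trans_le (hfs w hw).2.2.2.2.1)
      simp only [hg, Fintype.sum_prod_type, Fintype.sum_bool, sgn]
      rcases lt_or_gt_of_ne hx with h1 | h1 <;> rcases lt_or_gt_of_ne hy with h2 | h2 <;>
        simp [h1, h2, h1.not_gt, h2.not_gt]
  have hpiece : ∀ i w, g i w ≠ 0 → freqMap w ∈ piece ρ N M L (sgn i.1) (sgn i.2) := by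
    intro i w hw
    obtain ⟨h0, h1, h2⟩ := hgne i w hw
    obtain ⟨a1, a2, a3, a4, a5, a6⟩ := hfs w h0
    refine ⟨a1, a2, ?_⟩
    rw [sgn_mul_of_pos h1, sgn_mul_of_pos h2]
    exact ⟨a3, a4, a5, a6⟩
  set K := ENNReal.ofReal (resConst κ ρ * (L * (L / N) ^ (1 - κ) * (N * M) ^ κ)) with hK
  have hfour : ∀ i, ∫⁻ x, ‖(𝓕 (g i)) x‖ₑ ^ 4 ≤ K * (∫⁻ v, ‖u v‖ₑ ^ 2) ^ 2 := by
    intro i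
    refine (lintegral_fourier_four_le (g i) K fun z => ?_).trans ?_
    · refine le_trans ?_ (volume_piece_inter_le hκ hκ1 hρ hN hM hL (abs_sgn i.1) (abs_sgn i.2)
        (freqMap z))
      refine le_trans (measure_mono ?_) (volume_freqMap_preimage_le _)
      rintro w ⟨h1, h2⟩
      refine ⟨hpiece i w h1, ?_⟩
      rw [← freqMap_sub]
      exact hpiece i _ h2
    · gcongr
      rw [← lintegral_toE3, ← hUf, lintegral_sq_fourier]
      refine lintegral_mono fun w => ?_
      rw [hg]
      split_ifs
      · exact le_rfl
      · simp
  have hmeas : ∀ i, Measurable fun x => ‖(𝓕 (g i)) x‖ₑ ^ 4 := fun i =>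
    ((𝓕 (g i)).continuous.enorm.measurable).pow_const 4
  calc ∫⁻ v, ‖u v‖ₑ ^ 4 = ∫⁻ x, ‖(𝓕 f) x‖ₑ ^ 4 := by rw [hUf, lintegral_toE3]
    _ ≤ ∫⁻ x, 256 * ∑ i, ‖(𝓕 (g i)) x‖ₑ ^ 4 := by
        refine lintegral_mono fun x => ?_
        have hx : (𝓕 f) x = ∑ i, (𝓕 (g i)) x := by
          rw [hsum, ← SchwartzMap.fourierTransformCLM_apply ℂ, map_sum, sum_apply]
          rfl
        rw [hx]
        calc ‖∑ i, (𝓕 (g i)) x‖ₑ ^ 4 ≤ (∑ i, ‖(𝓕 (g i)) x‖ₑ) ^ 4 := by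
              gcongr; exact enorm_sum_le _ _
          _ ≤ _ := sum_pow_four_le _
          _ = _ := by norm_num
    _ = 256 * ∑ i, ∫⁻ x, ‖(𝓕 (g i)) x‖ₑ ^ 4 := by
        rw [lintegral_const_mul _ (Finset.measurable_sum _ fun i _ => hmeas i),
          lintegral_finsetSum _ fun i _ => hmeas i]
    _ ≤ 256 * ∑ _i : Bool × Bool, K * (∫⁻ v, ‖u v‖ₑ ^ 2) ^ 2 := by
        gcongr with i _; exact hfour i
    _ = _ := by
        rw [ENNReal.ofReal_mul (by norm_num), ← hK, Finset.sum_const]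
        simp only [Finset.card_univ, Fintype.card_prod, Fintype.card_bool, nsmul_eq_mul]
        rw [show ENNReal.ofReal 1024 = 1024 by norm_num, ← mul_assoc, ← mul_assoc]
        norm_num

/-- Hölder interpolation: `4/(1+δ) = 2a + 4b` with `a = 2δ/(1+δ)`, `b = (1-δ)/(1+δ)`, `a + b = 1`. -/
lemma lpnorm3_interp {δ w : ℝ} (hδ : 0 < δ) (hδ1 : δ < 1) (hw : 0 ≤ w) (u : 𝓢(ℝ × ℝ × ℝ, ℂ))
    (h : ∫⁻ v, ‖u v‖ₑ ^ 4 ≤ ENNReal.ofReal w * (∫⁻ v, ‖u v‖ₑ ^ 2) ^ 2) :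
    lpnorm3 (4 / (1 + δ)) (fun t x y => u (t, x, y)) ≤
      ENNReal.ofReal (w ^ ((1 - δ) / 4)) * lpnorm3 2 (fun t x y => u (t, x, y)) := by
  have e2 : lpnorm3 2 (fun t x y => u (t, x, y)) = (∫⁻ v, ‖u v‖ₑ ^ 2) ^ (1 / (2 : ℝ)) := by
    simp only [lpnorm3, ← enorm_eq_nnnorm]
    congr 1
    refine lintegral_congr fun v => ?_
    exact ENNReal.rpow_natCast _ 2
  have ep : lpnorm3 (4 / (1 + δ)) (fun t x y => u (t, x, y)) =
      (∫⁻ v, ‖u v‖ₑ ^ (4 / (1 + δ))) ^ ((1 + δ) / 4) := by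
    simp only [lpnorm3, ← enorm_eq_nnnorm, one_div_div]
  have hm : Measurable fun v => ‖u v‖ₑ := u.continuous.enorm.measurable
  set I := ∫⁻ v, ‖u v‖ₑ ^ 2 with hI
  set a := 2 * δ / (1 + δ) with ha
  set b := (1 - δ) / (1 + δ) with hb
  have ha0 : 0 ≤ a := by positivity
  have hb0 : 0 ≤ b := div_nonneg (by linarith) (by linarith)
  have hab : a + b = 1 := by rw [ha, hb]; field_simp; ring
  have hint : ∫⁻ v, ‖u v‖ₑ ^ (4 / (1 + δ)) ≤ ENNReal.ofReal w ^ b * I ^ (a + 2 * b) := by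
    calc ∫⁻ v, ‖u v‖ₑ ^ (4 / (1 + δ)) = ∫⁻ v, (‖u v‖ₑ ^ 2) ^ a * (‖u v‖ₑ ^ 4) ^ b := by
          refine lintegral_congr fun v => ?_
          rw [← ENNReal.rpow_natCast, ← ENNReal.rpow_natCast, ← ENNReal.rpow_mul,
            ← ENNReal.rpow_mul, ← ENNReal.rpow_add_of_nonneg _ _ (by positivity) (by positivity)]
          congr 1
          rw [ha, hb]; push_cast; field_simp; ring
      _ ≤ I ^ a * (∫⁻ v, ‖u v‖ₑ ^ 4) ^ b :=
          ENNReal.lintegral_mul_norm_pow_le (hm.pow_const 2).aemeasurable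
            (hm.pow_const 4).aemeasurable ha0 hb0 hab
      _ ≤ I ^ a * (ENNReal.ofReal w * I ^ 2) ^ b := by gcongr
      _ = _ := by
          rw [ENNReal.mul_rpow_of_nonneg _ _ hb0, ← ENNReal.rpow_natCast, ← ENNReal.rpow_mul,
            ENNReal.rpow_add_of_nonneg _ _ ha0 (by positivity)]
          push_cast
          ring
  rw [e2, ep]
  have h4 : 0 ≤ (1 + δ) / 4 := by linarith
  calc _ ≤ (ENNReal.ofReal w ^ b * I ^ (a + 2 * b)) ^ ((1 + δ) / 4) := by gcongr
    _ = _ := by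
      rw [ENNReal.mul_rpow_of_nonneg _ _ h4, ← ENNReal.rpow_mul, ← ENNReal.rpow_mul,
        ← ENNReal.ofReal_rpow_of_nonneg hw (by linarith)]
      congr 2
      · rw [hb]; field_simp
      · rw [ha, hb]; field_simp; ring

/-- Where `|ξ|` and `|η|` are comparable and `|(ξ, η)| ≥ N/2`, both are bounded below by a multiple
of `N`. -/
lemma freq_lower_bound {c₁ c₂ N ξ η : ℝ} (hc₁ : 0 < c₁) (hc : c₁ ≤ c₂) (hN : 0 < N)
    (h : N / 2 ≤ √(ξ ^ 2 + η ^ 2)) (h1 : c₁ * |η| ≤ |ξ|) (h2 : |ξ| ≤ c₂ * |η|) :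
    min 1 c₁ / (2 * (1 + c₂)) * N ≤ |ξ| ∧ min 1 c₁ / (2 * (1 + c₂)) * N ≤ |η| := by
  have hs : √(ξ ^ 2 + η ^ 2) ≤ |ξ| + |η| := by
    apply Real.sqrt_le_iff.2
    refine ⟨by positivity, ?_⟩
    nlinarith [sq_abs ξ, sq_abs η, mul_nonneg (abs_nonneg ξ) (abs_nonneg η)]
  have hη : N / (2 * (1 + c₂)) ≤ |η| := by
    rw [div_le_iff₀ (by linarith)]; nlinarith
  have hpos : 0 ≤ N / (2 * (1 + c₂)) := div_nonneg hN.le (by linarith)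
  have e : min 1 c₁ / (2 * (1 + c₂)) * N = min 1 c₁ * (N / (2 * (1 + c₂))) := by ring
  rw [e]
  constructor
  · calc _ ≤ c₁ * (N / (2 * (1 + c₂))) := by gcongr; exact min_le_right _ _
      _ ≤ c₁ * |η| := by gcongr
      _ ≤ _ := h1
  · calc _ ≤ 1 * (N / (2 * (1 + c₂))) := by gcongr; exact min_le_left _ _
      _ ≤ _ := by rwa [one_mul]

/-- Improved `L^{4/(1+δ)}` Strichartz-type estimate for dyadically localized
functions whose spatial frequencies satisfy `|ξ| ∼ |η|`:
`‖u‖_{L^{4/(1+δ)}} ≤ C (NM)^{ε/4} N^{-(1-δ-ε)/4} L^{(1-δ)/2 - ε/4} ‖u‖_{L²}`. -/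
theorem lp_strichartz_localized_improved :
    ∃ δ₀ : ℝ, δ₀ ∈ Set.Ioo (0 : ℝ) 1 ∧ ∀ δ : ℝ, δ ∈ Set.Ioo 0 δ₀ →
      ∀ ε : ℝ, 0 < ε → ε < 1 - δ →
        ∀ c₁ c₂ : ℝ, 0 < c₁ → c₁ ≤ c₂ →
          ∃ C : ℝ, 0 < C ∧
            ∀ N M L : ℝ, (∃ n : ℤ, N = 2 ^ n) → (∃ m : ℤ, M = 2 ^ m) →
              (∃ l : ℤ, L = 2 ^ l) →
              ∀ u : SchwartzMap (ℝ × ℝ × ℝ) ℂ,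
                (∀ τ ξ η : ℝ, ftt (fun t x y => u (t, x, y)) τ ξ η ≠ 0 →
                  (N / 2 ≤ Real.sqrt (ξ ^ 2 + η ^ 2) ∧ Real.sqrt (ξ ^ 2 + η ^ 2) ≤ 2 * N ∧
                    M / 2 ≤ |ξ + η| ∧ |ξ + η| ≤ 2 * M ∧
                    L / 2 ≤ |τ - ξ ^ 3 - η ^ 3| ∧ |τ - ξ ^ 3 - η ^ 3| ≤ 2 * L ∧
                    c₁ * |η| ≤ |ξ| ∧ |ξ| ≤ c₂ * |η|)) →
                lpnorm3 (4 / (1 + δ)) (fun t x y => u (t, x, y)) ≤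
                  ENNReal.ofReal
                      (C * (N * M) ^ (ε / 4) * N ^ (-(1 - δ - ε) / 4) *
                        L ^ ((1 - δ) / 2 - ε / 4)) *
                    lpnorm3 2 (fun t x y => u (t, x, y)) := by
  -- the argument works for all `0 < δ < 1`, so any `δ₀` will do
  refine ⟨1 / 2, ⟨by norm_num, by norm_num⟩, ?_⟩
  intro δ hδ ε hε hεδ c₁ c₂ hc₁ hc
  have hδ0 : 0 < δ := hδ.1
  have hδ1 : 0 < 1 - δ := by linarith
  set κ := ε / (1 - δ) with hκdef
  have hκ : 0 < κ := by positivity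
  have hκ1 : κ < 1 := by rw [hκdef, div_lt_one hδ1]; exact hεδ
  have hκδ : κ * (1 - δ) = ε := by rw [hκdef]; field_simp
  set ρ := min 1 c₁ / (2 * (1 + c₂)) with hρdef
  have hρ : 0 < ρ := div_pos (lt_min one_pos hc₁) (by linarith)
  have hR : 0 < resConst κ ρ := by
    have hs : 0 < √ρ := Real.sqrt_pos.2 hρ
    unfold resConst; positivity
  refine ⟨(1024 * resConst κ ρ) ^ ((1 - δ) / 4), by positivity, ?_⟩
  rintro N M L ⟨n, hn⟩ ⟨m, hm⟩ ⟨l, hl⟩ u hu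
  have hN : 0 < N := by rw [hn]; positivity
  have hM : 0 < M := by rw [hm]; positivity
  have hL : 0 < L := by rw [hl]; positivity
  have hfour := lintegral_four_le hκ hκ1 hρ hN hM hL u (fun τ ξ η hne => by
    obtain ⟨a1, a2, -, a4, -, a6, a7, a8⟩ := hu τ ξ η hne
    have hb := freq_lower_bound hc₁ hc hN a1 a7 a8
    refine ⟨a6, a4, hb.1, ?_, hb.2, ?_⟩
    · exact (Real.abs_le_sqrt (by nlinarith [sq_nonneg η])).trans a2
    · exact (Real.abs_le_sqrt (by nlinarith [sq_nonneg ξ])).trans a2)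
  refine (lpnorm3_interp hδ0 (by linarith) (by positivity) u hfour).trans (le_of_eq ?_)
  congr 2
  have hexp : ∀ A : ℝ, 0 < A → (A * (L * (L / N) ^ (1 - κ) * (N * M) ^ κ)) ^ ((1 - δ) / 4) =
      A ^ ((1 - δ) / 4) * (N * M) ^ (ε / 4) * N ^ (-(1 - δ - ε) / 4) *
        L ^ ((1 - δ) / 2 - ε / 4) := by
    intro A hA
    have hLN : 0 ≤ (L / N) ^ (1 - κ) := by positivity
    have hNM : 0 ≤ (N * M) ^ κ := by positivity
    rw [Real.mul_rpow hA.le (by positivity), Real.mul_rpow (by positivity) hNM,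
      Real.mul_rpow hL.le hLN,
      ← Real.rpow_mul (by positivity), ← Real.rpow_mul (by positivity),
      show κ * ((1 - δ) / 4) = ε / 4 by linear_combination hκδ / 4,
      show (1 - κ) * ((1 - δ) / 4) = (1 - δ - ε) / 4 by linear_combination -hκδ / 4,
      Real.div_rpow hL.le hN.le, show -(1 - δ - ε) / 4 = -((1 - δ - ε) / 4) by ring,
      Real.rpow_neg hN.le,
      show (1 - δ) / 2 - ε / 4 = (1 - δ) / 4 + (1 - δ - ε) / 4 by ring, Real.rpow_add hL]
    ring
  rw [← mul_assoc]
  exact hexp _ (by positivity)
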